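/- Let K be a pretriangulated category such that Thick(K) is distributive, i.e. for all thick subcategories A, B, C of K one has A ∩ thick(B ∪ C) = thick((A ∩ B) ∪ (A ∩ C)). Then Thick(K) satisfies the infinite distributive (frame) law: for every thick subcategory L and every family {M_λ | λ ∈ Λ} of thick subcategories, L ∩ thick(⋃_{λ∈Λ} M_λ) = thick(⋃_{λ∈Λ} (L ∩ M_λ)). -/

import Mathlib

/-!
A thick closure is finitary: the closure axioms involve at most two objects of the subcategory
at a time, so the union of the directed family of the subcategories `thick(⋃_{l ∈ s} M l)`, `s` a
finite set of indices, is already thick (`isThick_iUnion_finset`) and hence equals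
`thick(⋃_l M l)`. An object of `L ∩ thick(⋃_l M l)` therefore lies in `L ∩ thick(⋃_{l ∈ s} M l)`
for some finite `s`, where induction on `s` and the binary distributive law apply
(`inter_thickClosure_finset_subset`). The reverse inclusion holds in any complete lattice.
-/

open CategoryTheory Limits Pretriangulated

universe w v u

variable {C : Type u} [Category.{v} C] [HasZeroObject C] [HasShift C ℤ] [Preadditive C]
  [∀ n : ℤ, (shiftFunctor C n).Additive] [Pretriangulated C]

/-- A thick subcategory of a pretriangulated category, viewed as a class of objects:
it contains the zero objects and is closed under isomorphisms, all shifts, cones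
(for every distinguished triangle `X → Y → Z → X⟦1⟧`, if `X` and `Y` lie in the
subcategory then so does `Z`), and direct summands (retracts). -/
structure IsThick (S : Set C) : Prop where
  zero : ∀ X : C, IsZero X → X ∈ S
  mem_of_iso : ∀ {X Y : C}, (X ≅ Y) → X ∈ S → Y ∈ S
  shift : ∀ (X : C) (n : ℤ), X ∈ S → (X⟦n⟧ : C) ∈ S
  cone : ∀ T, (T ∈ distTriang C) → T.obj₁ ∈ S → T.obj₂ ∈ S → T.obj₃ ∈ S
  retract : ∀ (X Y : C) (s : Y ⟶ X) (r : X ⟶ Y), s ≫ r = 𝟙 Y → X ∈ S → Y ∈ S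

/-- `thickClosure A` is the smallest thick subcategory containing `A`, i.e. the
intersection of all thick subcategories containing `A`. -/
def thickClosure (A : Set C) : Set C := ⋂₀ {S : Set C | IsThick S ∧ A ⊆ S}

lemma isThick_thickClosure (A : Set C) : IsThick (thickClosure A) where
  zero X hX := fun _ hS => hS.1.zero X hX
  mem_of_iso e h := fun S hS => hS.1.mem_of_iso e (h S hS)
  shift X n h := fun S hS => hS.1.shift X n (h S hS)
  cone T hT h₁ h₂ := fun S hS => hS.1.cone T hT (h₁ S hS) (h₂ S hS)
  retract X Y s r hsr h := fun S hS => hS.1.retract X Y s r hsr (h S hS)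

lemma subset_thickClosure (A : Set C) : A ⊆ thickClosure A :=
  fun _ hX _ hS => hS.2 hX

lemma thickClosure_subset {A S : Set C} (hS : IsThick S) (h : A ⊆ S) : thickClosure A ⊆ S :=
  fun _ hX => hX S ⟨hS, h⟩

lemma thickClosure_mono {A B : Set C} (h : A ⊆ B) : thickClosure A ⊆ thickClosure B :=
  thickClosure_subset (isThick_thickClosure B) (h.trans (subset_thickClosure B))

lemma IsThick.inter {S T : Set C} (hS : IsThick S) (hT : IsThick T) : IsThick (S ∩ T) where
  zero X hX := ⟨hS.zero X hX, hT.zero X hX⟩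
  mem_of_iso e h := ⟨hS.mem_of_iso e h.1, hT.mem_of_iso e h.2⟩
  shift X n h := ⟨hS.shift X n h.1, hT.shift X n h.2⟩
  cone D hD h₁ h₂ := ⟨hS.cone D hD h₁.1 h₂.1, hT.cone D hD h₁.2 h₂.2⟩
  retract X Y s r hsr h := ⟨hS.retract X Y s r hsr h.1, hT.retract X Y s r hsr h.2⟩

/-- The finite joins of a family form a directed system, so their union is thick: only the cone
axiom involves two objects, and these lie in a common finite join. -/
lemma isThick_iUnion_finset {Λ : Type w} (M : Λ → Set C) :
    IsThick (⋃ s : Finset Λ, thickClosure (⋃ l ∈ s, M l)) where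
  zero X hX := Set.mem_iUnion.2 ⟨∅, (isThick_thickClosure _).zero X hX⟩
  mem_of_iso e h := by
    obtain ⟨s, hs⟩ := Set.mem_iUnion.1 h
    exact Set.mem_iUnion.2 ⟨s, (isThick_thickClosure _).mem_of_iso e hs⟩
  shift X n h := by
    obtain ⟨s, hs⟩ := Set.mem_iUnion.1 h
    exact Set.mem_iUnion.2 ⟨s, (isThick_thickClosure _).shift X n hs⟩
  cone T hT h₁ h₂ := by
    classical
    obtain ⟨s, hs⟩ := Set.mem_iUnion.1 h₁
    obtain ⟨t, ht⟩ := Set.mem_iUnion.1 h₂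
    refine Set.mem_iUnion.2 ⟨s ∪ t, (isThick_thickClosure _).cone T hT ?_ ?_⟩
    · exact thickClosure_mono
        (Set.biUnion_subset_biUnion_left fun _ h => Finset.mem_union_left t h) hs
    · exact thickClosure_mono
        (Set.biUnion_subset_biUnion_left fun _ h => Finset.mem_union_right s h) ht
  retract X Y i r hir h := by
    obtain ⟨s, hs⟩ := Set.mem_iUnion.1 h
    exact Set.mem_iUnion.2 ⟨s, (isThick_thickClosure _).retract X Y i r hir hs⟩

lemma thickClosure_iUnion_subset {Λ : Type w} (M : Λ → Set C) :
    thickClosure (⋃ l, M l) ⊆ ⋃ s : Finset Λ, thickClosure (⋃ l ∈ s, M l) := by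
  refine thickClosure_subset (isThick_iUnion_finset M) (Set.iUnion_subset fun l X hX => ?_)
  exact Set.mem_iUnion.2 ⟨{l}, subset_thickClosure _ (by simpa using hX)⟩

/-- The frame law for a finite subfamily, by induction from the binary distributive law. -/
lemma inter_thickClosure_finset_subset
    (hdist : ∀ A B C' : Set C, IsThick A → IsThick B → IsThick C' →
      A ∩ thickClosure (B ∪ C') = thickClosure ((A ∩ B) ∪ (A ∩ C')))
    {L : Set C} (hL : IsThick L) {Λ : Type w} {M : Λ → Set C} (hM : ∀ l, IsThick (M l))
    (s : Finset Λ) :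
    L ∩ thickClosure (⋃ l ∈ s, M l) ⊆ thickClosure (⋃ l, L ∩ M l) := by
  classical
  have hR := isThick_thickClosure (⋃ l, L ∩ M l)
  induction s using Finset.induction_on with
  | empty => exact Set.inter_subset_right.trans (thickClosure_subset hR (by simp))
  | insert a s _ ih =>
    rw [Finset.set_biUnion_insert]
    have hle : thickClosure (M a ∪ ⋃ l ∈ s, M l) ⊆
        thickClosure (M a ∪ thickClosure (⋃ l ∈ s, M l)) :=
      thickClosure_mono (Set.union_subset_union_right _ (subset_thickClosure _))
    refine (Set.inter_subset_inter_right L hle).trans ?_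
    rw [hdist L _ _ hL (hM a) (isThick_thickClosure _)]
    refine thickClosure_subset hR (Set.union_subset ?_ ih)
    exact (Set.subset_iUnion (fun l => L ∩ M l) a).trans (subset_thickClosure _)

/-- If the lattice of thick subcategories is distributive (for all thick `A`, `B`, `C'`:
`A ∩ thick(B ∪ C') = thick((A ∩ B) ∪ (A ∩ C'))`), then it satisfies the infinite
distributive (frame) law: for every thick `L` and every family `{M_λ}` of thick
subcategories, `L ∩ thick(⋃_λ M_λ) = thick(⋃_λ (L ∩ M_λ))`. -/
theorem frame_law_of_distrib
    (hdist : ∀ A B C' : Set C, IsThick A → IsThick B → IsThick C' →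
      A ∩ thickClosure (B ∪ C') = thickClosure ((A ∩ B) ∪ (A ∩ C')))
    (L : Set C) (hL : IsThick L)
    (Λ : Type w) (M : Λ → Set C) (hM : ∀ l, IsThick (M l)) :
    L ∩ thickClosure (⋃ l, M l) = thickClosure (⋃ l, L ∩ M l) := by
  apply Set.Subset.antisymm
  · rintro X ⟨hXL, hX⟩
    obtain ⟨s, hs⟩ := Set.mem_iUnion.1 (thickClosure_iUnion_subset M hX)
    exact inter_thickClosure_finset_subset hdist hL hM s ⟨hXL, hs⟩
  · refine thickClosure_subset (hL.inter (isThick_thickClosure _))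
      (Set.iUnion_subset fun l => Set.inter_subset_inter_right L ?_)
    exact (Set.subset_iUnion M l).trans (subset_thickClosure _)
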